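/- arXiv:1708.00766 — 5 statements merged into one kernel-verified Lean document; each statement's English description precedes it below -/
import Mathlib

section
/- For every integer radius r ≥ 1, the signum circle path of radius r satisfies: for every n with 0 ≤ n ≤ 2r−1, either (x_{n+1} = x_n − 1 and y_{n+1} = y_n) or (x_{n+1} = x_n and y_{n+1} = y_n + 1) (so consecutive points are nearest neighbours on the integer lattice ℤ², i.e. |x_{n+1} − x_n| + |y_{n+1} − y_n| = 1), and the path consisting of the 2r steps starting at (x_0, y_0) = (r, 0) ends at (x_{2r}, y_{2r}) = (0, r). -/
/-!
In the rotated coordinates `a = x + y`, `c = r - n - 1`, let `v` and `u` be the distances of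
`(a, c)` from the foci `(1, 0)` and `(-1, 0)`. Since `u ^ 2 - v ^ 2 = 4 * a`, the argument of `sgn`
equals `(u - v) / 4 * (u + v - 2 * K)` with `K = √2 * r`. Hence, as long as `a > 0`, the path
increases `a` by `1` inside the ellipse `u + v ≤ 2 * K` and decreases it by `1` outside. For
`|c| ≤ r - 1` the arc bounding this ellipse from above is `1`-Lipschitz in `c`, and `c` moves by `1`
in each step, so each step leads to within distance `1` of the arc. At `c = -(r - 1)` the arc lies
strictly between `r` and `r + 1`, so parity forces `a = r + 1` after `2 * r - 1` steps. At `c = -r`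
this is outside the ellipse, so the last step leads to `a = r`.
-/

open Filter Finset Real

/-- The signum function of the paper: `-1` if `t ≤ 0` and `1` if `t > 0`. -/
noncomputable def sgn (t : ℝ) : ℝ := if t ≤ 0 then -1 else 1

/-- The signum term `sₙ` determining the step of the path, computed from the
current position `(x, y)`, with `a = x + y` and `c = r - n - 1`. -/
noncomputable def sStep (r n : ℕ) (x y : ℝ) : ℝ :=
  -sgn ((x + y) + (r : ℝ) / Real.sqrt 2 *
    (Real.sqrt (((x + y) - 1) ^ 2 + ((r : ℝ) - n - 1) ^ 2) -
     Real.sqrt (((x + y) + 1) ^ 2 + ((r : ℝ) - n - 1) ^ 2)))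

/-- The signum circle path of radius `r`: `x₀ = r`, `y₀ = 0`,
`xₙ₊₁ = xₙ + sₙ/2 - 1/2`, `yₙ₊₁ = yₙ + sₙ/2 + 1/2`. -/
noncomputable def circlePath (r : ℕ) : ℕ → ℝ × ℝ
  | 0 => ((r : ℝ), 0)
  | n + 1 =>
    let p := circlePath r n
    let s := sStep r n p.1 p.2
    (p.1 + s / 2 - 1 / 2, p.2 + s / 2 + 1 / 2)

/-- The signum term `sₙ` along the signum circle path of radius `r`. -/
noncomputable def sTerm (r n : ℕ) : ℝ := sStep r n (circlePath r n).1 (circlePath r n).2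

lemma mul_add_half_mul_sqrt_sub_sqrt_nonpos_iff {f a : ℝ} (hfa : 0 < f * a) (c K : ℝ) :
    f * a + K / 2 * (√((a - f) ^ 2 + c ^ 2) - √((a + f) ^ 2 + c ^ 2)) ≤ 0 ↔
      √((a - f) ^ 2 + c ^ 2) + √((a + f) ^ 2 + c ^ 2) ≤ 2 * K := by
  have h_lt : √((a - f) ^ 2 + c ^ 2) < √((a + f) ^ 2 + c ^ 2) :=
    Real.sqrt_lt_sqrt (by positivity) (by linarith)
  have hv : √((a - f) ^ 2 + c ^ 2) ^ 2 = (a - f) ^ 2 + c ^ 2 := Real.sq_sqrt (by positivity)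
  have hu : √((a + f) ^ 2 + c ^ 2) ^ 2 = (a + f) ^ 2 + c ^ 2 := Real.sq_sqrt (by positivity)
  set v := √((a - f) ^ 2 + c ^ 2)
  set u := √((a + f) ^ 2 + c ^ 2)
  have factor : f * a + K / 2 * (v - u) = (u - v) / 4 * (u + v - 2 * K) := by
    linear_combination (hv - hu) / 4
  rw [factor, ← not_lt, mul_pos_iff_of_pos_left (by linarith), not_lt, sub_nonpos, add_comm u]

lemma sqrt_add_sqrt_le_two_mul_iff {f K : ℝ} (hK : 0 < K) (hfK : f ^ 2 < K ^ 2) (a c : ℝ) :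
    √((a - f) ^ 2 + c ^ 2) + √((a + f) ^ 2 + c ^ 2) ≤ 2 * K ↔
      a ^ 2 / K ^ 2 + c ^ 2 / (K ^ 2 - f ^ 2) ≤ 1 := by
  have hv : √((a - f) ^ 2 + c ^ 2) ^ 2 = (a - f) ^ 2 + c ^ 2 := Real.sq_sqrt (by positivity)
  have hu : √((a + f) ^ 2 + c ^ 2) ^ 2 = (a + f) ^ 2 + c ^ 2 := Real.sq_sqrt (by positivity)
  have hvu : √((a - f) ^ 2 + c ^ 2) * √((a + f) ^ 2 + c ^ 2) =
      √((a ^ 2 + c ^ 2 + f ^ 2) ^ 2 - 4 * a ^ 2 * f ^ 2) := by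
    rw [← Real.sqrt_mul (by positivity)]
    ring_nf
  have hB : 0 < K ^ 2 - f ^ 2 := sub_pos.2 hfK
  have clear_denoms : a ^ 2 / K ^ 2 + c ^ 2 / (K ^ 2 - f ^ 2) ≤ 1 ↔
      a ^ 2 * (K ^ 2 - f ^ 2) + K ^ 2 * c ^ 2 ≤ K ^ 2 * (K ^ 2 - f ^ 2) := by
    rw [div_add_div _ _ (by positivity) hB.ne', div_le_one (by positivity)]
  calc √((a - f) ^ 2 + c ^ 2) + √((a + f) ^ 2 + c ^ 2) ≤ 2 * K
    _ ↔ (√((a - f) ^ 2 + c ^ 2) + √((a + f) ^ 2 + c ^ 2)) ^ 2 ≤ (2 * K) ^ 2 :=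
        (sq_le_sq₀ (by positivity) (by positivity)).symm
    _ ↔ √((a ^ 2 + c ^ 2 + f ^ 2) ^ 2 - 4 * a ^ 2 * f ^ 2) ≤
          2 * K ^ 2 - (a ^ 2 + c ^ 2 + f ^ 2) := by
        rw [add_sq, hv, hu, mul_assoc, hvu]
        constructor <;> intro h <;> linarith
    _ ↔ 0 ≤ 2 * K ^ 2 - (a ^ 2 + c ^ 2 + f ^ 2) ∧
          a ^ 2 * (K ^ 2 - f ^ 2) + K ^ 2 * c ^ 2 ≤ K ^ 2 * (K ^ 2 - f ^ 2) := by
        rw [Real.sqrt_le_iff]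
        exact and_congr_right fun _ ↦ ⟨fun h ↦ by linarith, fun h ↦ by linarith⟩
    _ ↔ a ^ 2 / K ^ 2 + c ^ 2 / (K ^ 2 - f ^ 2) ≤ 1 := by
        rw [clear_denoms, and_iff_right_iff_imp]
        intro h
        have ha : a ^ 2 ≤ K ^ 2 := le_of_mul_le_mul_right (by nlinarith) hB
        have hc : c ^ 2 ≤ K ^ 2 - f ^ 2 :=
          le_of_mul_le_mul_left (by nlinarith) (show 0 < K ^ 2 by positivity)
        linarith

section CircleArc

/-- The arc `a = circleArc r c ≥ 0` of the ellipse
`a ^ 2 / (2 * r ^ 2) + c ^ 2 / (2 * r ^ 2 - 1) = 1` with foci `(a, c) = (±1, 0)`. It serves as the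
threshold for `x + y` that decides the steps of the signum circle path of radius `r`. It has the
junk value `0` where `c ^ 2 > 2 * r ^ 2 - 1 > 0`. -/
noncomputable def circleArc (r c : ℝ) : ℝ := √(2 * r ^ 2 * (1 - c ^ 2 / (2 * r ^ 2 - 1)))

variable {r c d : ℝ}

lemma le_circleArc_iff {a : ℝ} (ha : 0 < a) (hr : r ≠ 0) :
    a ≤ circleArc r c ↔ a ^ 2 / (2 * r ^ 2) + c ^ 2 / (2 * r ^ 2 - 1) ≤ 1 := by
  rw [circleArc, Real.le_sqrt' ha, ← div_le_iff₀' (by positivity), le_sub_iff_add_le]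

lemma lt_circleArc (hc : |c| ≤ r - 1) : r < circleArc r c := by
  have hr : 1 ≤ r := sub_nonneg.1 ((abs_nonneg c).trans hc)
  have hB : 0 < 2 * r ^ 2 - 1 := by nlinarith
  have hc2 : c ^ 2 ≤ (r - 1) ^ 2 := sq_le_sq' (abs_le.1 hc).1 (abs_le.1 hc).2
  have hlt : c ^ 2 / (2 * r ^ 2 - 1) < 1 / 2 := by
    rw [div_lt_iff₀ hB]
    nlinarith
  exact Real.lt_sqrt_of_sq_lt (by nlinarith)

lemma circleArc_lt (hr : 1 ≤ r) (hc : r - 1 ≤ |c|) : circleArc r c < r + 1 := by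
  have hB : 0 < 2 * r ^ 2 - 1 := by nlinarith
  have hc2 : (r - 1) ^ 2 ≤ c ^ 2 := by
    rw [← sq_abs c]
    exact pow_le_pow_left₀ (by linarith) hc 2
  rw [← not_le, le_circleArc_iff (by linarith) (by linarith), not_le,
    div_add_div _ _ (by positivity) hB.ne', one_lt_div (by positivity)]
  nlinarith [mul_le_mul_of_nonneg_left hc2 (show 0 ≤ 2 * r ^ 2 by positivity)]

lemma abs_circleArc_sub_circleArc_le (hc : |c| ≤ r - 1) (hd : |d| ≤ r - 1) :
    |circleArc r c - circleArc r d| ≤ |c - d| := by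
  have hr : 1 ≤ r := sub_nonneg.1 ((abs_nonneg c).trans hc)
  have hB : 0 < 2 * r ^ 2 - 1 := by nlinarith
  have hrc := lt_circleArc hc
  have hrd := lt_circleArc hd
  have sq_arc {e : ℝ} (he : r < circleArc r e) :
      circleArc r e ^ 2 = 2 * r ^ 2 * (1 - e ^ 2 / (2 * r ^ 2 - 1)) :=
    Real.sq_sqrt (Real.sqrt_pos.1 (show 0 < circleArc r e by linarith)).le
  have slope : 2 * r ^ 2 / (2 * r ^ 2 - 1) * |c + d| ≤ circleArc r c + circleArc r d := by
    have h_endpoint : 2 * r ^ 2 / (2 * r ^ 2 - 1) * (2 * (r - 1)) ≤ 2 * r := by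
      rw [div_mul_eq_mul_div, div_le_iff₀ hB]
      nlinarith
    have h_add : |c + d| ≤ 2 * (r - 1) := (abs_add_le c d).trans (by linarith)
    exact (mul_le_mul_of_nonneg_left h_add (by positivity)).trans (h_endpoint.trans (by linarith))
  have hpos : 0 < circleArc r c + circleArc r d := by linarith
  refine le_of_mul_le_mul_right ?_ hpos
  calc |circleArc r c - circleArc r d| * (circleArc r c + circleArc r d)
      = |circleArc r c ^ 2 - circleArc r d ^ 2| := by
        rw [sq_sub_sq, abs_mul, abs_of_pos hpos, mul_comm]
    _ = |2 * r ^ 2 / (2 * r ^ 2 - 1) * (c + d) * (d - c)| := by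
        rw [sq_arc hrc, sq_arc hrd]
        ring_nf
    _ = |c - d| * (2 * r ^ 2 / (2 * r ^ 2 - 1) * |c + d|) := by
        rw [abs_mul, abs_mul, abs_of_pos (show 0 < 2 * r ^ 2 / (2 * r ^ 2 - 1) by positivity),
          abs_sub_comm d c, mul_comm]
    _ ≤ |c - d| * (circleArc r c + circleArc r d) :=
        mul_le_mul_of_nonneg_left slope (abs_nonneg _)

end CircleArc

lemma abs_sub_le_one_of_step_toward {R : Type*} [CommRing R] [LinearOrder R] [IsStrictOrderedRing R]
    {a h : ℕ → R} {N : ℕ} (ha : 0 < a 0) (h0 : |a 0 - h 0| ≤ 2)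
    (one_lt : ∀ n < N, 1 < h n) (hh : ∀ n, n + 1 < N → |h n - h (n + 1)| ≤ 1)
    (step : ∀ n < N, 0 < a n → a (n + 1) = a n + if a n ≤ h n then 1 else -1) :
    ∀ n < N, |a (n + 1) - h n| ≤ 1 := by
  have one_step {n : ℕ} (hn : n < N) (han : 0 < a n) (hd : |a n - h n| ≤ 2) :
      |a (n + 1) - h n| ≤ 1 := by
    rw [step n hn han]
    rw [abs_le] at hd ⊢
    split_ifs <;> constructor <;> linarith
  intro n hn
  induction n with
  | zero => exact one_step hn ha h0
  | succ n ih =>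
    have ih := ih (by lia)
    refine one_step hn ?_ ?_
    · linarith [(abs_le.1 ih).1, one_lt n (by lia)]
    · linarith [abs_sub_le (a (n + 1)) (h n) (h (n + 1)), hh n hn]

section CirclePath

lemma sTerm_eq_neg_one_or_one (r n : ℕ) : sTerm r n = -1 ∨ sTerm r n = 1 := by
  unfold sTerm sStep sgn
  split_ifs <;> simp

lemma circlePath_succ_eq_or (r n : ℕ) :
    circlePath r (n + 1) = ((circlePath r n).1 - 1, (circlePath r n).2) ∨
      circlePath r (n + 1) = ((circlePath r n).1, (circlePath r n).2 + 1) := by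
  have hsucc : circlePath r (n + 1) = ((circlePath r n).1 + sTerm r n / 2 - 1 / 2,
      (circlePath r n).2 + sTerm r n / 2 + 1 / 2) := rfl
  rcases sTerm_eq_neg_one_or_one r n with hs | hs
  · exact .inl (by rw [hsucc, hs]; ext <;> ring)
  · exact .inr (by rw [hsucc, hs]; ext <;> ring)

lemma circlePath_fst_sub_snd (r n : ℕ) : (circlePath r n).1 - (circlePath r n).2 = r - n := by
  induction n with
  | zero => simp [circlePath]
  | succ n ih =>
    push_cast
    rcases circlePath_succ_eq_or r n with h | h <;> rw [h] <;> linarith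

/-- The rotated coordinate `aₙ = xₙ + yₙ` of the `n`-th point of the signum circle path. -/
noncomputable def circlePathSum (r n : ℕ) : ℝ := (circlePath r n).1 + (circlePath r n).2

lemma circlePathSum_zero (r : ℕ) : circlePathSum r 0 = r := by
  simp [circlePathSum, circlePath]

lemma circlePathSum_succ (r n : ℕ) : circlePathSum r (n + 1) = circlePathSum r n + sTerm r n := by
  simp only [circlePathSum, circlePath, sTerm]
  ring

lemma exists_circlePathSum_eq (r n : ℕ) : ∃ m : ℤ, circlePathSum r n = r + n + 2 * m := by
  induction n with
  | zero => exact ⟨0, by simp [circlePathSum_zero]⟩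
  | succ n ih =>
    obtain ⟨m, hm⟩ := ih
    rw [circlePathSum_succ, hm]
    rcases sTerm_eq_neg_one_or_one r n with hs | hs
    · exact ⟨m - 1, by rw [hs]; push_cast; ring⟩
    · exact ⟨m, by rw [hs]; push_cast; ring⟩

variable {r n : ℕ}

lemma sTerm_eq_ite (hr : 1 ≤ r) (ha : 0 < circlePathSum r n) :
    sTerm r n = if circlePathSum r n ≤ circleArc r (r - n - 1) then 1 else -1 := by
  have hR : (1 : ℝ) ≤ r := mod_cast hr
  have half : (r : ℝ) / √2 = √2 * r / 2 := by
    rw [div_eq_div_iff (by positivity) two_ne_zero]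
    linear_combination -(r : ℝ) * Real.sq_sqrt (zero_le_two (α := ℝ))
  have sq_axis : (√2 * (r : ℝ)) ^ 2 = 2 * r ^ 2 := by
    rw [mul_pow, Real.sq_sqrt zero_le_two]
  have sgn_arg_nonpos_iff := mul_add_half_mul_sqrt_sub_sqrt_nonpos_iff (f := 1) (by rwa [one_mul])
    ((r : ℝ) - n - 1) (√2 * r)
  rw [sqrt_add_sqrt_le_two_mul_iff (by positivity) (by rw [sq_axis]; nlinarith), one_mul, sq_axis,
    one_pow, ← le_circleArc_iff ha (by positivity), ← half] at sgn_arg_nonpos_iff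
  unfold circlePathSum at sgn_arg_nonpos_iff ⊢
  simp only [sTerm, sStep, sgn, sgn_arg_nonpos_iff]
  split_ifs <;> simp

lemma abs_circlePathSum_succ_sub_circleArc_le_one (hr : 1 ≤ r) (hn : n + 1 < 2 * r) :
    |circlePathSum r (n + 1) - circleArc r (r - n - 1)| ≤ 1 := by
  have hR : (1 : ℝ) ≤ r := mod_cast hr
  have hc {n : ℕ} (hn : n < 2 * r - 1) : |(r : ℝ) - n - 1| ≤ r - 1 := by
    have hn' : (n : ℝ) + 2 ≤ 2 * r := mod_cast (by lia : n + 2 ≤ 2 * r)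
    exact abs_le.2 ⟨by linarith, by linarith [n.cast_nonneg (α := ℝ)]⟩
  refine abs_sub_le_one_of_step_toward (a := circlePathSum r)
    (h := fun n ↦ circleArc r (r - n - 1)) (N := 2 * r - 1) ?_ ?_ ?_ ?_ ?_ n (by lia)
  · rw [circlePathSum_zero]
    positivity
  · have hc0 : |(r : ℝ) - (0 : ℕ) - 1| = r - 1 := by
      rw [Nat.cast_zero, sub_zero, abs_of_nonneg (by linarith)]
    rw [circlePathSum_zero, abs_le]
    constructor <;> linarith [lt_circleArc hc0.le, circleArc_lt hR hc0.ge]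
  · exact fun n hn ↦ hR.trans_lt (lt_circleArc (hc hn))
  · intro n hn
    refine (abs_circleArc_sub_circleArc_le (hc (by lia)) (hc hn)).trans_eq ?_
    simp
  · exact fun n _ ha ↦ by rw [circlePathSum_succ, sTerm_eq_ite hr ha]

lemma circlePathSum_two_mul_sub_one (hr : 1 ≤ r) : circlePathSum r (2 * r - 1) = r + 1 := by
  have hR : (1 : ℝ) ≤ r := mod_cast hr
  obtain ⟨n, hn⟩ : ∃ n, 2 * r = n + 2 := ⟨2 * r - 2, by lia⟩
  have hn' : 2 * (r : ℝ) = n + 2 := mod_cast hn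
  have hc : |(r : ℝ) - n - 1| = r - 1 := by
    rw [abs_sub_comm, abs_of_nonneg] <;> linarith
  have hnear := abs_le.1 (abs_circlePathSum_succ_sub_circleArc_le_one hr (n := n) (by lia))
  have hlower := lt_circleArc hc.le
  have hupper := circleArc_lt hR hc.ge
  obtain ⟨m, hm⟩ := exists_circlePathSum_eq r (n + 1)
  push_cast at hm
  have hm_lower : -(r : ℤ) < m := by
    have : -(r : ℝ) < m := by linarith
    exact_mod_cast this
  have hm_upper : 2 * m < 3 - 2 * (r : ℤ) := by
    have : 2 * (m : ℝ) < 3 - 2 * r := by linarith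
    exact_mod_cast this
  have hm_eq : (m : ℝ) = 1 - r := mod_cast (by lia : m = 1 - r)
  rw [show 2 * r - 1 = n + 1 by lia, hm, hm_eq]
  linarith

lemma circlePathSum_two_mul (hr : 1 ≤ r) : circlePathSum r (2 * r) = r := by
  have hR : (1 : ℝ) ≤ r := mod_cast hr
  have hsum := circlePathSum_two_mul_sub_one hr
  have houtside : circleArc r ((r : ℝ) - (2 * r - 1 : ℕ) - 1) < r + 1 := by
    have hc : (r : ℝ) - (2 * r - 1 : ℕ) - 1 = -r := by
      rw [Nat.cast_sub (by lia)]
      push_cast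
      ring
    rw [hc]
    exact circleArc_lt hR (by rw [abs_neg, Nat.abs_cast]; linarith)
  have hs : sTerm r (2 * r - 1) = -1 := by
    rw [sTerm_eq_ite hr (by rw [hsum]; positivity), hsum, if_neg houtside.not_ge]
  rw [show 2 * r = 2 * r - 1 + 1 by lia, circlePathSum_succ, hsum, hs]
  ring

lemma circlePath_two_mul (hr : 1 ≤ r) : circlePath r (2 * r) = (0, (r : ℝ)) := by
  have hsum := circlePathSum_two_mul hr
  have hdiff := circlePath_fst_sub_snd r (2 * r)
  unfold circlePathSum at hsum
  push_cast at hdiff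
  ext <;> dsimp only <;> linarith

end CirclePath

/-- each step of the signum circle path moves one unit left or one
unit up (so consecutive points are nearest neighbours for the Manhattan
distance), the path starts at `(r, 0)` and ends after `2r` steps at `(0, r)`. -/
theorem signumPath_valid_steps_and_endpoints (r : ℕ) (hr : 1 ≤ r) :
    (∀ n : ℕ, n ≤ 2 * r - 1 →
      (((circlePath r (n + 1)).1 = (circlePath r n).1 - 1 ∧
          (circlePath r (n + 1)).2 = (circlePath r n).2) ∨
        ((circlePath r (n + 1)).1 = (circlePath r n).1 ∧
          (circlePath r (n + 1)).2 = (circlePath r n).2 + 1)) ∧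
      |(circlePath r (n + 1)).1 - (circlePath r n).1| +
        |(circlePath r (n + 1)).2 - (circlePath r n).2| = 1) ∧
    circlePath r 0 = ((r : ℝ), 0) ∧
    circlePath r (2 * r) = (0, (r : ℝ)) := by
  refine ⟨fun n _ ↦ ?_, rfl, circlePath_two_mul hr⟩
  rcases circlePath_succ_eq_or r n with h | h
  · simp [h]
  · simp [h]
end

section
/- For every integer radius r ≥ 1, the partial sums S_n of the signum terms of the signum circle path of radius r satisfy S_{2r−1} = 0, S_{2r−2} = 1, and the symmetry S_n = S_{2r−2−n} for all n with 0 ≤ n ≤ 2r−2. -/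
open Filter Finset Real

/-!
Only `a = x + y` matters: it starts at `r` and moves by `sₙ = ±1`. For `a > 0`, rationalising the
difference of distances shows that `sₙ = 1` exactly when `(a, r - n - 1)` lies in the closed ellipse
with foci `(±1, 0)` and semi-major axis `√2 r`. So `a` performs a walk that steps towards the
boundary of the ellipse as the height falls from `r` to `-r`. On the way down to height `0` the
boundary always separates `a - 1` from `a + 1`; as the ellipse is symmetric in the height, this
forces the second half of the walk to retrace the first one backwards.
-/

section RealEllipse

variable {a : ℝ} (c e : ℝ)

lemma add_mul_focalDist_sub_nonpos_iff (k : ℝ) (ha : 0 < a) :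
    a + k * (√((a - e) ^ 2 + c ^ 2) - √((a + e) ^ 2 + c ^ 2)) ≤ 0 ↔
      √((a - e) ^ 2 + c ^ 2) + √((a + e) ^ 2 + c ^ 2) ≤ 4 * k * e := by
  have hQ_sq : √((a - e) ^ 2 + c ^ 2) ^ 2 = (a - e) ^ 2 + c ^ 2 := sq_sqrt (by positivity)
  have hP_sq : √((a + e) ^ 2 + c ^ 2) ^ 2 = (a + e) ^ 2 + c ^ 2 := sq_sqrt (by positivity)
  have hQ : 0 ≤ √((a - e) ^ 2 + c ^ 2) := sqrt_nonneg _
  have hP : 0 ≤ √((a + e) ^ 2 + c ^ 2) := sqrt_nonneg _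
  set Q := √((a - e) ^ 2 + c ^ 2)
  set P := √((a + e) ^ 2 + c ^ 2)
  have hQP : 0 < Q + P := by
    by_contra! h
    have hQ0 : Q = 0 := by linarith
    have hP0 : P = 0 := by linarith
    rw [hQ0] at hQ_sq
    rw [hP0] at hP_sq
    nlinarith [sq_nonneg e, sq_nonneg c, pow_pos ha 2]
  have rationalise : (a + k * (Q - P)) * (Q + P) = a * (Q + P - 4 * k * e) := by
    linear_combination k * hQ_sq - k * hP_sq
  calc a + k * (Q - P) ≤ 0
      ↔ (a + k * (Q - P)) * (Q + P) ≤ 0 := (smul_nonpos_iff_nonpos_of_pos_right hQP).symm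
    _ ↔ a * (Q + P - 4 * k * e) ≤ 0 := by rw [rationalise]
    _ ↔ Q + P - 4 * k * e ≤ 0 := smul_nonpos_iff_nonpos_of_pos_left ha
    _ ↔ Q + P ≤ 4 * k * e := sub_nonpos

lemma focalDist_add_le_iff (a : ℝ) {A : ℝ} (hA : 0 ≤ A) (he : e ^ 2 < A ^ 2) :
    √((a - e) ^ 2 + c ^ 2) + √((a + e) ^ 2 + c ^ 2) ≤ 2 * A ↔
      (A ^ 2 - e ^ 2) * a ^ 2 + A ^ 2 * c ^ 2 ≤ A ^ 2 * (A ^ 2 - e ^ 2) := by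
  set q := (a - e) ^ 2 + c ^ 2 with hq
  set p := (a + e) ^ 2 + c ^ 2 with hp
  set T := 2 * A ^ 2 - (a ^ 2 + c ^ 2 + e ^ 2) with hT
  have hq0 : 0 ≤ q := by positivity
  have hp0 : 0 ≤ p := by positivity
  have sq_sum : (√q + √p) ^ 2 = 2 * (a ^ 2 + c ^ 2 + e ^ 2) + 2 * √(q * p) := by
    rw [sqrt_mul hq0]
    linear_combination sq_sqrt hq0 + sq_sqrt hp0
  have sq_gap : T ^ 2 - q * p =
      4 * (A ^ 2 * (A ^ 2 - e ^ 2) - ((A ^ 2 - e ^ 2) * a ^ 2 + A ^ 2 * c ^ 2)) := by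
    rw [hT, hq, hp]; ring
  calc √q + √p ≤ 2 * A
      ↔ (√q + √p) ^ 2 ≤ (2 * A) ^ 2 := (sq_le_sq₀ (by positivity) (by positivity)).symm
    _ ↔ √(q * p) ≤ T := by rw [sq_sum]; constructor <;> intro h <;> linarith
    _ ↔ 0 ≤ T ∧ q * p ≤ T ^ 2 := sqrt_le_iff
    _ ↔ _ := by
      refine ⟨fun h => by linarith [sq_gap, h.2], fun h => ⟨?_, by linarith [sq_gap]⟩⟩
      have in_disc : a ^ 2 + c ^ 2 ≤ A ^ 2 := by
        refine le_of_mul_le_mul_right ?_ (sub_pos.2 he)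
        linarith [mul_nonneg (sq_nonneg e) (sq_nonneg c)]
      linarith

end RealEllipse

section BoundaryWalk

open Classical in
/-- The walk started at `a₀` and steered by `E`: at time `n` it moves up if its position, read at
height `h - n - 1`, belongs to `E`, and down otherwise. Points of `E` are pairs
`(position, height)`. -/
noncomputable def boundaryWalk (E : Set (ℤ × ℤ)) (a₀ : ℤ) (h : ℕ) : ℕ → ℤ
  | 0 => a₀
  | n + 1 => boundaryWalk E a₀ h n +
      if (boundaryWalk E a₀ h n, (h : ℤ) - n - 1) ∈ E then 1 else -1

/-- The boundary of `E` separates the two neighbours of position `a` at height `c`, the left one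
being inside. -/
def Straddles (E : Set (ℤ × ℤ)) (a c : ℤ) : Prop := (a - 1, c) ∈ E ∧ (a + 1, c) ∉ E

variable {E : Set (ℤ × ℤ)} {a₀ : ℤ} {h n : ℕ}

lemma boundaryWalk_succ_of_mem (hn : (boundaryWalk E a₀ h n, (h : ℤ) - n - 1) ∈ E) :
    boundaryWalk E a₀ h (n + 1) = boundaryWalk E a₀ h n + 1 := by
  rw [boundaryWalk, if_pos hn]

lemma boundaryWalk_succ_of_notMem (hn : (boundaryWalk E a₀ h n, (h : ℤ) - n - 1) ∉ E) :
    boundaryWalk E a₀ h (n + 1) = boundaryWalk E a₀ h n - 1 := by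
  rw [boundaryWalk, if_neg hn, sub_eq_add_neg]

variable (symm : ∀ a c, (a, c) ∈ E → (a, -c) ∈ E)
  (straddles : ∀ n < h, Straddles E (boundaryWalk E a₀ h n) (h - n))
include symm straddles

lemma boundaryWalk_add_eq_sub {k : ℕ} (hk : k ≤ h) :
    boundaryWalk E a₀ h (h + k) = boundaryWalk E a₀ h (h - k) := by
  induction k with
  | zero => rfl
  | succ k ih =>
    obtain ⟨m, hm⟩ : ∃ m, h = m + (k + 1) := ⟨h - (k + 1), by lia⟩
    specialize ih (by lia)
    rw [show h - k = m + 1 by lia] at ih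
    rw [show h - (k + 1) = m by lia, ← add_assoc]
    obtain ⟨left_mem, right_notMem⟩ := straddles m (by lia)
    have mirror : (h : ℤ) - (h + k : ℕ) - 1 = -(h - m) := by lia
    -- The step undone at time `h + k` was taken at time `m`; straddling forces the opposite sign.
    by_cases up : (boundaryWalk E a₀ h m, (h : ℤ) - m - 1) ∈ E
    · rw [boundaryWalk_succ_of_mem up] at ih
      rw [boundaryWalk_succ_of_notMem, ih, add_sub_cancel_right]
      rw [ih, mirror]
      exact fun hmem => right_notMem (by simpa only [neg_neg] using symm _ _ hmem)
    · rw [boundaryWalk_succ_of_notMem up] at ih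
      rw [boundaryWalk_succ_of_mem, ih, sub_add_cancel]
      rw [ih, mirror]
      exact symm _ _ left_mem

lemma boundaryWalk_eq_of_add_eq {m n : ℕ} (hmn : m + n = 2 * h) :
    boundaryWalk E a₀ h m = boundaryWalk E a₀ h n := by
  wlog hle : m ≤ n generalizing m n
  · exact (this (by lia) (by lia)).symm
  have reflect := boundaryWalk_add_eq_sub symm straddles (k := n - h) (by lia)
  rw [show h + (n - h) = n by lia, show h - (n - h) = m by lia] at reflect
  exact reflect.symm

end BoundaryWalk

section LatticeEllipse

/-- The lattice points of the closed elliptical region with foci `(±1, 0)` and squared semi-axes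
`2r²` and `2r² - 1`. -/
def latticeEllipse (r : ℤ) : Set (ℤ × ℤ) :=
  {p | (2 * r ^ 2 - 1) * p.1 ^ 2 + 2 * r ^ 2 * p.2 ^ 2 ≤ 2 * r ^ 2 * (2 * r ^ 2 - 1)}

variable {r a c : ℤ}

lemma mem_latticeEllipse : (a, c) ∈ latticeEllipse r ↔
    (2 * r ^ 2 - 1) * a ^ 2 + 2 * r ^ 2 * c ^ 2 ≤ 2 * r ^ 2 * (2 * r ^ 2 - 1) := Iff.rfl

lemma neg_height_mem_latticeEllipse (h : (a, c) ∈ latticeEllipse r) :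
    (a, -c) ∈ latticeEllipse r := by
  simpa only [mem_latticeEllipse, neg_sq] using h

lemma sub_one_sub_one_mem_latticeEllipse (hr : 1 ≤ r) (ha : 0 ≤ a) (hc : 1 ≤ c)
    (h : (a, c) ∈ latticeEllipse r) : (a - 1, c - 1) ∈ latticeEllipse r := by
  rw [mem_latticeEllipse] at h ⊢
  have hr2 : 1 ≤ r ^ 2 := one_le_pow₀ hr
  nlinarith [mul_nonneg (show 0 ≤ 2 * r ^ 2 - 1 by lia) ha,
    mul_nonneg (sq_nonneg r) (sub_nonneg.2 hc)]

lemma add_one_sub_one_notMem_latticeEllipse (hcr : c ≤ r) (hr : 1 ≤ r) (hca : c ≤ a)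
    (h : (a, c) ∉ latticeEllipse r) : (a + 1, c - 1) ∉ latticeEllipse r := by
  rw [mem_latticeEllipse, not_le] at h ⊢
  have hr2 : r ≤ r ^ 2 := le_self_pow₀ hr two_ne_zero
  nlinarith [mul_nonneg (show 0 ≤ 2 * r ^ 2 - 1 by lia) (sub_nonneg.2 hca)]

lemma straddles_latticeEllipse_self (hr : 1 ≤ r) : Straddles (latticeEllipse r) r r := by
  have hr3 : 0 ≤ r ^ 2 * (r - 1) := mul_nonneg (sq_nonneg r) (by lia)
  constructor
  · rw [mem_latticeEllipse]; nlinarith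
  · rw [mem_latticeEllipse, not_le]; nlinarith

lemma self_sub_one_mem_latticeEllipse (hr : 1 ≤ r) : (r, r - 1) ∈ latticeEllipse r := by
  rw [mem_latticeEllipse]
  nlinarith [mul_nonneg (sq_nonneg r) (sub_nonneg.2 hr)]

lemma pos_of_straddles_latticeEllipse (hr : 1 ≤ r) (hc : 0 ≤ c) (hca : c ≤ a)
    (h : Straddles (latticeEllipse r) a c) : 0 < a := by
  by_contra! ha
  obtain rfl : a = 0 := by lia
  obtain rfl : c = 0 := by lia
  refine h.2 (mem_latticeEllipse.2 ?_)
  nlinarith [one_le_pow₀ hr (n := 2)]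

end LatticeEllipse

/-- The integer walk followed, up to time `2 * r`, by the coordinate sum `xₙ + yₙ` of the signum
circle path. -/
noncomputable def coordSumWalk (r : ℕ) : ℕ → ℤ := boundaryWalk (latticeEllipse r) r r

section CoordSumWalk

variable {r n : ℕ} (hr : 1 ≤ r)
include hr

lemma coordSumWalk_ge_and_straddles (hn : n ≤ r) :
    (r : ℤ) - n ≤ coordSumWalk r n ∧
      Straddles (latticeEllipse r) (coordSumWalk r n) (r - n) := by
  have hr' : (1 : ℤ) ≤ r := mod_cast hr
  induction n with
  | zero =>
    rw [Nat.cast_zero, sub_zero]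
    exact ⟨le_rfl, straddles_latticeEllipse_self hr'⟩
  | succ n ih =>
    obtain ⟨height_le, left_mem, right_notMem⟩ := ih (by lia)
    rw [Nat.cast_succ, ← sub_sub]
    by_cases up : (coordSumWalk r n, (r : ℤ) - n - 1) ∈ latticeEllipse r
    · rw [show coordSumWalk r (n + 1) = coordSumWalk r n + 1 from boundaryWalk_succ_of_mem up]
      refine ⟨by lia, by rwa [add_sub_cancel_right], ?_⟩
      exact add_one_sub_one_notMem_latticeEllipse (by lia) hr' (by lia) right_notMem
    · rw [show coordSumWalk r (n + 1) = coordSumWalk r n - 1 from boundaryWalk_succ_of_notMem up]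
      refine ⟨by lia, ?_, by rwa [sub_add_cancel]⟩
      exact sub_one_sub_one_mem_latticeEllipse hr' (by lia) (by lia) left_mem

lemma coordSumWalk_eq_of_add_eq {m n : ℕ} (hmn : m + n = 2 * r) :
    coordSumWalk r m = coordSumWalk r n :=
  boundaryWalk_eq_of_add_eq (fun _ _ => neg_height_mem_latticeEllipse)
    (fun _ hk => (coordSumWalk_ge_and_straddles hr hk.le).2) hmn

lemma coordSumWalk_pos (hn : n ≤ 2 * r) : 0 < coordSumWalk r n := by
  wlog hnr : n ≤ r generalizing n
  · rw [coordSumWalk_eq_of_add_eq hr (show n + (2 * r - n) = 2 * r by lia)]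
    exact this (by lia) (by lia)
  obtain ⟨height_le, straddles⟩ := coordSumWalk_ge_and_straddles hr hnr
  exact pos_of_straddles_latticeEllipse (mod_cast hr) (by lia) height_le straddles

lemma coordSumWalk_one : coordSumWalk r 1 = r + 1 := by
  refine boundaryWalk_succ_of_mem ?_
  rw [boundaryWalk, Nat.cast_zero, sub_zero]
  exact self_sub_one_mem_latticeEllipse (mod_cast hr)

end CoordSumWalk

section CirclePath

variable {r n : ℕ}

open Classical in
lemma sStep_eq_ite (hr : 1 ≤ r) {x y : ℝ} {a : ℤ} (ha : 0 < a) (hxy : x + y = a) :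
    sStep r n x y = if (a, (r : ℤ) - n - 1) ∈ latticeEllipse r then 1 else -1 := by
  have hr2 : (1 : ℝ) ≤ (r : ℝ) ^ 2 := one_le_pow₀ (mod_cast hr)
  have sq_axis : (√2 * (r : ℝ)) ^ 2 = 2 * (r : ℝ) ^ 2 := by
    rw [mul_pow, sq_sqrt zero_le_two]
  have focal_const : 4 * (r / √2) * 1 = 2 * (√2 * (r : ℝ)) := by
    field_simp
    rw [sq_sqrt zero_le_two]
    ring
  have nonpos_iff_mem : (a : ℝ) + r / √2 * (√(((a : ℝ) - 1) ^ 2 + ((r : ℝ) - n - 1) ^ 2) -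
      √(((a : ℝ) + 1) ^ 2 + ((r : ℝ) - n - 1) ^ 2)) ≤ 0 ↔
      (a, (r : ℤ) - n - 1) ∈ latticeEllipse r := by
    rw [add_mul_focalDist_sub_nonpos_iff _ _ _ (mod_cast ha), focal_const,
      focalDist_add_le_iff _ _ _ (by positivity) (by rw [sq_axis]; linarith), sq_axis, one_pow,
      mem_latticeEllipse]
    exact_mod_cast Iff.rfl
  simp only [sStep, sgn, hxy, nonpos_iff_mem]
  split_ifs
  · exact neg_neg 1
  · rfl

lemma circlePath_succ_fst_add_snd :
    (circlePath r (n + 1)).1 + (circlePath r (n + 1)).2 =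
      (circlePath r n).1 + (circlePath r n).2 + sTerm r n := by
  simp only [circlePath, sTerm]
  ring

lemma circlePath_fst_add_snd (hr : 1 ≤ r) (hn : n ≤ 2 * r) :
    (circlePath r n).1 + (circlePath r n).2 = coordSumWalk r n := by
  induction n with
  | zero => simp only [circlePath, coordSumWalk, boundaryWalk, add_zero, Int.cast_natCast]
  | succ n ih =>
    specialize ih (by lia)
    rw [circlePath_succ_fst_add_snd, sTerm, sStep_eq_ite hr (coordSumWalk_pos hr (by lia)) ih, ih]
    simp only [coordSumWalk, boundaryWalk]
    push_cast
    rfl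

lemma sum_sTerm (hr : 1 ≤ r) (hn : n ≤ 2 * r) :
    ∑ k ∈ range n, sTerm r k = coordSumWalk r n - r := by
  rw [← circlePath_fst_add_snd hr hn,
    sum_range_induction _ (fun n => (circlePath r n).1 + (circlePath r n).2 - r)]
  · simp only [circlePath, add_zero, sub_self]
  · intro k _
    rw [circlePath_succ_fst_add_snd]
    ring

end CirclePath

/-- the partial sums `Sₙ = ∑_{k=0}^{n} sₖ` of the signum terms
satisfy `S_{2r-1} = 0`, `S_{2r-2} = 1`, and the symmetry `Sₙ = S_{2r-2-n}` for
all `0 ≤ n ≤ 2r-2`. -/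
theorem signumPath_partialSum_symmetry (r : ℕ) (hr : 1 ≤ r) :
    (∑ k ∈ Finset.range (2 * r), sTerm r k) = 0 ∧
    (∑ k ∈ Finset.range (2 * r - 1), sTerm r k) = 1 ∧
    ∀ n : ℕ, n ≤ 2 * r - 2 →
      (∑ k ∈ Finset.range (n + 1), sTerm r k) =
        ∑ k ∈ Finset.range (2 * r - 2 - n + 1), sTerm r k := by
  refine ⟨?_, ?_, fun n hn => ?_⟩
  · have return_to_start : coordSumWalk r (2 * r) = r := coordSumWalk_eq_of_add_eq hr (add_zero _)
    rw [sum_sTerm hr le_rfl, return_to_start, Int.cast_natCast, sub_self]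
  · have return_to_first : coordSumWalk r (2 * r - 1) = r + 1 :=
      (coordSumWalk_eq_of_add_eq hr (by lia)).trans (coordSumWalk_one hr)
    rw [sum_sTerm hr (by lia), return_to_first]
    push_cast
    ring
  · have mirror : coordSumWalk r (n + 1) = coordSumWalk r (2 * r - 2 - n + 1) :=
      coordSumWalk_eq_of_add_eq hr (by lia)
    rw [sum_sTerm hr (by lia), sum_sTerm hr (by lia), mirror]
end

section
/- Conjecture: for every integer radius r ≥ 1, let A(r) = 2 · Σ_{n=0}^{2r−1} 1/a_n, where a_n = x_n + y_n is the Manhattan distance to the origin of the n-th point of the signum circle path of radius r (this is the arithmetic mean of the values π_n = 4r/a_n). Then A(r) converges to π as r → ∞. -/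
open Filter Finset Real

/-!
For `a > 0` the argument of `sgn` is positive exactly when `(a, c)` lies outside the ellipse with
foci `(±1, 0)` and semi-major axis `√2 r`. The ellipse is within distance `1` of the circle of
radius `√2 r`, so each step moves `aₙ` towards the height of that circle above `cₙ`. On `|c| ≤ r`
the height changes by at most `1` per step, hence `aₙ` follows it up to a bounded error. Since `aₙ`
has order `r`, this error does not affect the limit, and `∑ 1 / aₙ` becomes a Riemann sum of
`∫ dx / √(2 r² - x²)` over `[-r, r]`, the angle `π / 2` of a quarter circle.
-/

/-- The sum of the distances from `(a, c)` to the points `(1, 0)` and `(-1, 0)`; its level sets are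
the ellipses with these two foci. -/
noncomputable def focalSum (a c : ℝ) : ℝ := √((a - 1) ^ 2 + c ^ 2) + √((a + 1) ^ 2 + c ^ 2)

/-- The height above the abscissa `c` of the circle of radius `√2 r` centred at the origin. -/
noncomputable def circleHeight (r c : ℝ) : ℝ := √(2 * r ^ 2 - c ^ 2)

/-- The angle, measured clockwise from the vertical, of the point with abscissa `x` on the upper
half of the circle of radius `√2 r` centred at the origin. -/
noncomputable def circleAngle (r x : ℝ) : ℝ := arcsin (x / (√2 * r))

/-- The Manhattan distance `aₙ = xₙ + yₙ` of the `n`-th point of the signum circle path. -/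
noncomputable def pathDist (r n : ℕ) : ℝ := (circlePath r n).1 + (circlePath r n).2

/-- The number `cₙ = r - n - 1` of the signum rule, as a real number: it becomes negative. -/
def abscissa (r n : ℕ) : ℝ := (r : ℝ) - n - 1

theorem two_mul_sqrt_le_focalSum (a c : ℝ) : 2 * √(a ^ 2 + c ^ 2) ≤ focalSum a c := by
  have sq_left := sq_sqrt (show 0 ≤ (a - 1) ^ 2 + c ^ 2 by positivity)
  have sq_right := sq_sqrt (show 0 ≤ (a + 1) ^ 2 + c ^ 2 by positivity)
  have hprod : a ^ 2 + c ^ 2 - 1 ≤ √((a - 1) ^ 2 + c ^ 2) * √((a + 1) ^ 2 + c ^ 2) := by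
    rw [← sqrt_mul (by positivity)]
    exact le_sqrt_of_sq_le (by nlinarith [sq_nonneg c])
  refine le_of_sq_le_sq ?_ (by unfold focalSum; positivity)
  rw [mul_pow, sq_sqrt (by positivity), focalSum]
  linarith

theorem focalSum_le_two_mul_sqrt (a c : ℝ) : focalSum a c ≤ 2 * √(a ^ 2 + c ^ 2 + 1) := by
  refine le_of_sq_le_sq ?_ (by positivity)
  calc focalSum a c ^ 2
      ≤ 2 * (√((a - 1) ^ 2 + c ^ 2) ^ 2 + √((a + 1) ^ 2 + c ^ 2) ^ 2) := add_sq_le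
    _ = (2 * √(a ^ 2 + c ^ 2 + 1)) ^ 2 := by
        rw [mul_pow, sq_sqrt (by positivity), sq_sqrt (by positivity), sq_sqrt (by positivity)]
        ring

theorem add_mul_focal_difference_pos_iff {a : ℝ} (ha : 0 < a) (c k : ℝ) :
    0 < a + k * (√((a - 1) ^ 2 + c ^ 2) - √((a + 1) ^ 2 + c ^ 2)) ↔ 4 * k < focalSum a c := by
  have hsum : 0 < focalSum a c := by unfold focalSum; positivity
  -- The squares of the two distances differ by `4 a`.
  have factored : (a + k * (√((a - 1) ^ 2 + c ^ 2) - √((a + 1) ^ 2 + c ^ 2))) * focalSum a c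
      = a * (focalSum a c - 4 * k) := by
    have sq_left := sq_sqrt (show 0 ≤ (a - 1) ^ 2 + c ^ 2 by positivity)
    have sq_right := sq_sqrt (show 0 ≤ (a + 1) ^ 2 + c ^ 2 by positivity)
    unfold focalSum
    linear_combination k * (sq_left - sq_right)
  rw [← mul_pos_iff_of_pos_right hsum, factored, mul_pos_iff_of_pos_left ha, sub_pos]

section QuarterCircle

variable {r c u v : ℝ}

theorem le_circleHeight (hc : |c| ≤ r) : r ≤ circleHeight r c :=
  le_sqrt_of_sq_le (by linarith [sq_le_sq.mpr (hc.trans (le_abs_self r))])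

theorem circleHeight_self (hr : 0 ≤ r) : circleHeight r r = r := by
  rw [circleHeight, two_mul, add_sub_cancel_right, sqrt_sq hr]

theorem abs_circleHeight_sub_circleHeight_le (hr : 0 < r) (hu : |u| ≤ r) (hv : |v| ≤ r) :
    |circleHeight r u - circleHeight r v| ≤ |u - v| := by
  have hsum : |u + v| ≤ circleHeight r u + circleHeight r v :=
    (abs_add_le u v).trans
      (add_le_add (hu.trans (le_circleHeight hu)) (hv.trans (le_circleHeight hv)))
  have hpos : 0 < circleHeight r u + circleHeight r v :=
    add_pos (hr.trans_le (le_circleHeight hu)) (hr.trans_le (le_circleHeight hv))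
  have sq_height {x : ℝ} (hx : |x| ≤ r) : circleHeight r x ^ 2 = 2 * r ^ 2 - x ^ 2 :=
    sq_sqrt (by linarith [sq_le_sq.mpr (hx.trans (le_abs_self r)), sq_nonneg r])
  refine le_of_mul_le_mul_right ?_ hpos
  calc |circleHeight r u - circleHeight r v| * (circleHeight r u + circleHeight r v)
      = |circleHeight r u ^ 2 - circleHeight r v ^ 2| := by
        rw [sq_sub_sq, abs_mul, abs_of_pos hpos, mul_comm]
    _ = |u - v| * |u + v| := by
        rw [sq_height hu, sq_height hv, ← abs_mul, ← abs_neg]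
        ring_nf
    _ ≤ |u - v| * (circleHeight r u + circleHeight r v) := by gcongr

theorem hasDerivAt_arcsin_div {R x : ℝ} (hx : |x| < R) :
    HasDerivAt (fun y => arcsin (y / R)) (1 / √(R ^ 2 - x ^ 2)) x := by
  have hR : 0 < R := (abs_nonneg x).trans_lt hx
  obtain ⟨hlower, hupper⟩ : -1 < x / R ∧ x / R < 1 := by
    rwa [← abs_lt, abs_div, abs_of_pos hR, div_lt_one hR]
  have hsqrt : √(R ^ 2 - x ^ 2) = √(1 - (x / R) ^ 2) * R := by
    rw [show R ^ 2 - x ^ 2 = (1 - (x / R) ^ 2) * R ^ 2 by field_simp, sqrt_mul' _ (sq_nonneg R),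
      sqrt_sq hR.le]
  refine ((hasDerivAt_arcsin hlower.ne' hupper.ne).comp x
    ((hasDerivAt_id x).div_const R)).congr_deriv ?_
  rw [hsqrt, div_mul_div_comm, one_mul]

theorem hasDerivAt_circleAngle (hr : 0 < r) (hc : |c| ≤ r) :
    HasDerivAt (circleAngle r) (1 / circleHeight r c) c := by
  have hlt : |c| < √2 * r := hc.trans_lt (lt_mul_of_one_lt_left hr one_lt_sqrt_two)
  have hsq : (√2 * r) ^ 2 = 2 * r ^ 2 := by rw [mul_pow, sq_sqrt zero_le_two]
  unfold circleAngle circleHeight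
  exact hsq ▸ hasDerivAt_arcsin_div hlt

theorem circleAngle_neg (r x : ℝ) : circleAngle r (-x) = -circleAngle r x := by
  rw [circleAngle, neg_div, arcsin_neg, circleAngle]

theorem circleAngle_self (hr : r ≠ 0) : circleAngle r r = π / 4 := by
  refine arcsin_eq_of_sin_eq ?_ ⟨by linarith [pi_pos], by linarith [pi_pos]⟩
  rw [sin_pi_div_four, div_mul_cancel_right₀ hr, sqrt_div_self', one_div]

end QuarterCircle

theorem abs_one_div_sub_one_div_le {x y m k : ℝ} (hm : 0 < m) (hk : 0 < k) (hx : m ≤ x)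
    (hy : k ≤ y) : |1 / x - 1 / y| ≤ |x - y| / (m * k) := by
  have hx₀ : 0 < x := hm.trans_le hx
  have hy₀ : 0 < y := hk.trans_le hy
  rw [div_sub_div _ _ hx₀.ne' hy₀.ne', one_mul, mul_one, abs_div, abs_sub_comm,
    abs_of_pos (mul_pos hx₀ hy₀)]
  gcongr

theorem abs_one_div_circleHeight_sub_circleAngle_increment_le {r c : ℝ} (hr : 0 < r)
    (hc : -r ≤ c) (hc' : c + 1 ≤ r) :
    |1 / circleHeight r c - (circleAngle r (c + 1) - circleAngle r c)| ≤ 1 / (r * r) := by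
  have abs_le_radius {x : ℝ} (hx : x ∈ Set.Icc c (c + 1)) : |x| ≤ r :=
    abs_le.mpr ⟨hc.trans hx.1, hx.2.trans hc'⟩
  have hderiv : ∀ x ∈ Set.Icc c (c + 1), HasDerivAt (circleAngle r) (1 / circleHeight r x) x :=
    fun x hx => hasDerivAt_circleAngle hr (abs_le_radius hx)
  obtain ⟨ξ, hξ, hslope⟩ := exists_hasDerivAt_eq_slope (circleAngle r)
    (fun x => 1 / circleHeight r x) (lt_add_one c)
    (fun x hx => (hderiv x hx).continuousAt.continuousWithinAt)
    (fun x hx => hderiv x (Set.Ioo_subset_Icc_self hx))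
  rw [add_sub_cancel_left, div_one] at hslope
  have hc_abs : |c| ≤ r := abs_le_radius (Set.left_mem_Icc.mpr (lt_add_one c).le)
  have hξ_abs : |ξ| ≤ r := abs_le_radius (Set.Ioo_subset_Icc_self hξ)
  have hdist : |c - ξ| ≤ 1 := abs_le.mpr ⟨by linarith [hξ.2], by linarith [hξ.1]⟩
  calc |1 / circleHeight r c - (circleAngle r (c + 1) - circleAngle r c)|
      = |1 / circleHeight r c - 1 / circleHeight r ξ| := by rw [← hslope]
    _ ≤ |circleHeight r c - circleHeight r ξ| / (r * r) :=
        abs_one_div_sub_one_div_le hr hr (le_circleHeight hc_abs) (le_circleHeight hξ_abs)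
    _ ≤ 1 / (r * r) := by
        gcongr
        exact (abs_circleHeight_sub_circleHeight_le hr hc_abs hξ_abs).trans hdist

section Path

variable {r n : ℕ}

theorem pathDist_zero (r : ℕ) : pathDist r 0 = r := add_zero _

theorem pathDist_succ (r n : ℕ) : pathDist r (n + 1) = pathDist r n + sTerm r n := by
  simp only [pathDist, circlePath, sTerm]
  ring

theorem abscissa_succ (r n : ℕ) : abscissa r (n + 1) = abscissa r n - 1 := by
  simp only [abscissa, Nat.cast_succ]
  ring

theorem neg_le_abscissa (hn : n < 2 * r) : -(r : ℝ) ≤ abscissa r n := by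
  have hn' : (n : ℝ) + 1 ≤ 2 * r := by exact_mod_cast hn
  unfold abscissa
  linarith

theorem abscissa_add_one_le (r n : ℕ) : abscissa r n + 1 ≤ r := by
  unfold abscissa
  linarith [n.cast_nonneg (α := ℝ)]

theorem abs_abscissa_le (hn : n < 2 * r) : |abscissa r n| ≤ r :=
  abs_le.mpr ⟨neg_le_abscissa hn, by linarith [abscissa_add_one_le r n]⟩

theorem sTerm_eq_one_and_le_or_eq_neg_one_and_le (ha : 0 < pathDist r n) :
    (sTerm r n = 1 ∧ pathDist r n ≤ circleHeight r (abscissa r n)) ∨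
      (sTerm r n = -1 ∧ circleHeight r (abscissa r n) ≤ pathDist r n + 1) := by
  have sign_rule := add_mul_focal_difference_pos_iff ha (abscissa r n) (r / √2)
  have hsq : (2 * (r / √2)) ^ 2 = 2 * (r : ℝ) ^ 2 := by
    rw [mul_pow, div_pow, sq_sqrt zero_le_two]
    ring
  unfold sTerm sStep sgn
  split_ifs with hinside
  · refine .inl ⟨neg_neg 1, le_sqrt_of_sq_le ?_⟩
    have hfocal := not_lt.mp (mt sign_rule.mpr hinside.not_gt)
    have hsqrt : √(pathDist r n ^ 2 + abscissa r n ^ 2) ≤ 2 * (r / √2) := by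
      linarith [two_mul_sqrt_le_focalSum (pathDist r n) (abscissa r n)]
    have := (sqrt_le_left (by positivity)).mp hsqrt
    linarith
  · refine .inr ⟨rfl, (sqrt_le_left (by linarith)).mpr ?_⟩
    have hfocal := sign_rule.mp (not_le.mp hinside)
    have hsqrt : 2 * (r / √2) < √(pathDist r n ^ 2 + abscissa r n ^ 2 + 1) := by
      linarith [focalSum_le_two_mul_sqrt (pathDist r n) (abscissa r n)]
    have := (lt_sqrt (by positivity)).mp hsqrt
    linarith

theorem abs_pathDist_sub_circleHeight_le (hr : 4 ≤ r) (hn : n < 2 * r) :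
    |pathDist r n - circleHeight r (abscissa r n)| ≤ 3 := by
  have hr' : (4 : ℝ) ≤ r := by exact_mod_cast hr
  have hr₀ : (0 : ℝ) < r := by linarith
  induction n with
  | zero =>
    have hdrift := abs_circleHeight_sub_circleHeight_le hr₀ (abs_of_pos hr₀).le (abs_abscissa_le hn)
    rw [circleHeight_self hr₀.le, abscissa, Nat.cast_zero, sub_zero, sub_sub_cancel, abs_one]
      at hdrift
    rw [pathDist_zero, abscissa, Nat.cast_zero, sub_zero]
    linarith
  | succ n ih =>
    have hn' : n < 2 * r := n.lt_succ_self.trans hn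
    have htrack := abs_le.mp (ih hn')
    have hdrift := abs_circleHeight_sub_circleHeight_le hr₀ (abs_abscissa_le hn')
      (abs_abscissa_le hn)
    rw [abscissa_succ, sub_sub_cancel, abs_one, abs_le] at hdrift
    have hpos : 0 < pathDist r n := by
      linarith [le_circleHeight (abs_abscissa_le hn')]
    rw [pathDist_succ, abscissa_succ, abs_le]
    rcases sTerm_eq_one_and_le_or_eq_neg_one_and_le hpos with ⟨hs, hle⟩ | ⟨hs, hle⟩ <;>
      rw [hs] <;> constructor <;> linarith

theorem abs_one_div_pathDist_sub_circleAngle_increment_le (hr : 4 ≤ r) (hn : n < 2 * r) :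
    |1 / pathDist r n - (circleAngle r (abscissa r n + 1) - circleAngle r (abscissa r n))|
      ≤ 4 / ((r - 3) * r) := by
  have hr' : (4 : ℝ) ≤ r := by exact_mod_cast hr
  have hr₀ : (0 : ℝ) < r := by linarith
  have hr₃ : (0 : ℝ) < r - 3 := by linarith
  have htrack := abs_pathDist_sub_circleHeight_le hr hn
  have hheight := le_circleHeight (abs_abscissa_le hn)
  have hdist : (r : ℝ) - 3 ≤ pathDist r n := by linarith [(abs_le.mp htrack).1]
  have tracking_error :
      |1 / pathDist r n - 1 / circleHeight r (abscissa r n)| ≤ 3 / ((r - 3) * r) :=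
    (abs_one_div_sub_one_div_le hr₃ hr₀ hdist hheight).trans (by gcongr)
  have riemann_error :
      |1 / circleHeight r (abscissa r n)
        - (circleAngle r (abscissa r n + 1) - circleAngle r (abscissa r n))|
        ≤ 1 / ((r - 3) * r) :=
    (abs_one_div_circleHeight_sub_circleAngle_increment_le hr₀ (neg_le_abscissa hn)
      (abscissa_add_one_le r n)).trans (by gcongr; linarith)
  calc _ ≤ 3 / (((r : ℝ) - 3) * r) + 1 / ((r - 3) * r) :=
        (abs_sub_le _ _ _).trans (add_le_add tracking_error riemann_error)
    _ = 4 / ((r - 3) * r) := by rw [← add_div]; norm_num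

theorem sum_circleAngle_increment (hr : r ≠ 0) :
    ∑ n ∈ range (2 * r), (circleAngle r (abscissa r n + 1) - circleAngle r (abscissa r n))
      = π / 2 := by
  have htel := sum_range_sub' (fun n => circleAngle r (abscissa r n + 1)) (2 * r)
  have hfirst : abscissa r 0 + 1 = r := by simp [abscissa]
  have hlast : abscissa r (2 * r) + 1 = -r := by
    simp only [abscissa, Nat.cast_mul, Nat.cast_ofNat]
    ring
  simp only [abscissa_succ, sub_add_cancel, hfirst, hlast, circleAngle_neg,
    circleAngle_self (Nat.cast_ne_zero.mpr hr)] at htel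
  rw [htel]
  ring

theorem abs_two_mul_sum_one_div_pathDist_sub_pi_le (hr : 4 ≤ r) :
    |2 * ∑ n ∈ range (2 * r), 1 / pathDist r n - π| ≤ 16 / ((r : ℝ) - 3) := by
  have hr₀ : (r : ℝ) ≠ 0 := Nat.cast_ne_zero.mpr (by lia)
  calc |2 * ∑ n ∈ range (2 * r), 1 / pathDist r n - π|
      = 2 * |∑ n ∈ range (2 * r), (1 / pathDist r n
          - (circleAngle r (abscissa r n + 1) - circleAngle r (abscissa r n)))| := by
        rw [sum_sub_distrib, sum_circleAngle_increment (by lia), ← abs_two (α := ℝ), ← abs_mul,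
          abs_two]
        ring_nf
    _ ≤ 2 * ∑ _n ∈ range (2 * r), 4 / (((r : ℝ) - 3) * r) := by
        gcongr
        exact (abs_sum_le_sum_abs _ _).trans (sum_le_sum fun n hn =>
          abs_one_div_pathDist_sub_circleAngle_increment_le hr (mem_range.mp hn))
    _ = 16 / (r - 3) := by
        rw [sum_const, card_range, nsmul_eq_mul, Nat.cast_mul, Nat.cast_ofNat, ← div_div]
        field_simp
        norm_num

end Path

/-- Conjecture: the arithmetic mean
`A(r) = 2 · ∑_{n=0}^{2r-1} 1/aₙ` of the values `πₙ = 4r/aₙ`, where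
`aₙ = xₙ + yₙ` is the Manhattan distance of the `n`-th point of the signum
circle path of radius `r` to the origin, converges to `π` as `r → ∞`. -/
theorem arithmeticMean_pi_tendsto_pi :
    Filter.Tendsto (fun r : ℕ =>
      2 * ∑ n ∈ Finset.range (2 * r),
        1 / ((circlePath r n).1 + (circlePath r n).2))
      Filter.atTop (nhds Real.pi) := by
  have hbound : Tendsto (fun r : ℕ => 16 / ((r : ℝ) - 3)) atTop (nhds 0) :=
    tendsto_const_nhds.div_atTop
      (tendsto_atTop_add_const_right _ (-3) tendsto_natCast_atTop_atTop)
  refine tendsto_iff_norm_sub_tendsto_zero.mpr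
    (squeeze_zero' (.of_forall fun _ => norm_nonneg _) ?_ hbound)
  filter_upwards [eventually_ge_atTop 4] with r hr
  exact abs_two_mul_sum_one_div_pathDist_sub_pi_le hr
end

section
/- The series 2√2 · Σ_{k=0}^{∞} C(2k, k) / ((2k+1) · 8^k) converges and its sum equals π. -/
open Real

/-!
Termwise integration over `[0, x]` of the binomial series
`1 / √(1 - t²) = ∑ C(2n, n) / 4ⁿ * t²ⁿ` gives the Taylor series of `arcsin x`. The binomial
series has nonnegative terms, so it is its own dominating series, and since its sum is integrable
up to `±1` the endpoints `x = ±1` are covered as well. At `x = √2 / 2` the value is `π / 4`.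
-/

open MeasureTheory

section BinomialCoefficients

variable {K : Type*} [Field K]

lemma ascPochhammer_eval_one_half [NeZero (2 : K)] (n : ℕ) :
    (ascPochhammer K n).eval (1 / 2) = n.factorial * (n.centralBinom / 4 ^ n) := by
  induction n with
  | zero => simp
  | succ n ih =>
    have hrec : ((n : K) + 1) * (n + 1).centralBinom = 2 * (2 * n + 1) * n.centralBinom :=
      mod_cast congrArg (Nat.cast (R := K)) n.succ_mul_centralBinom_succ
    have hfour : (4 : K) ≠ 0 := by
      rw [show (4 : K) = 2 ^ 2 by norm_num]
      exact pow_ne_zero 2 two_ne_zero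
    calc (ascPochhammer K (n + 1)).eval (1 / 2)
        = n.factorial * (2 * (2 * n + 1) * n.centralBinom) / 4 ^ (n + 1) := by
          rw [ascPochhammer_succ_eval, ih, pow_succ]
          field_simp
          ring
      _ = (n + 1).factorial * ((n + 1).centralBinom / 4 ^ (n + 1)) := by
          rw [← hrec, Nat.factorial_succ]
          push_cast
          ring

lemma multichoose_one_half [CharZero K] (n : ℕ) :
    Ring.multichoose (1 / 2 : K) n = n.centralBinom / 4 ^ n := by
  have h := Ring.factorial_nsmul_multichoose_eq_ascPochhammer (1 / 2 : K) n
  rw [Polynomial.ascPochhammer_smeval_eq_eval, ascPochhammer_eval_one_half, nsmul_eq_mul] at h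
  exact mul_left_cancel₀ (Nat.cast_ne_zero.2 n.factorial_ne_zero) h

end BinomialCoefficients

lemma hasSum_one_div_sqrt_one_sub {x : ℝ} (hx : |x| < 1) :
    HasSum (fun n : ℕ ↦ (n.centralBinom : ℝ) / 4 ^ n * x ^ n) (1 / √(1 - x)) := by
  have hball : x ∈ Metric.eball (0 : ℝ) 1 := by
    simpa [← ofReal_norm, ENNReal.ofReal_lt_one] using hx
  simpa only [FormalMultilinearSeries.ofScalars_apply_eq, ← Ring.multichoose_eq,
    multichoose_one_half, smul_eq_mul, zero_add, ← sqrt_eq_rpow]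
    using (one_div_one_sub_rpow_hasFPowerSeriesOnBall_zero (1 / 2)).hasSum hball

-- No restriction to `[-1, 1]`: outside it the square root is `0` and `arcsin` is constant.
lemma intervalIntegrable_one_div_sqrt_one_sub_sq (a b : ℝ) :
    IntervalIntegrable (fun t : ℝ ↦ 1 / √(1 - t ^ 2)) volume a b :=
  deriv_arcsin ▸ (monotone_arcsin.monotoneOn _).intervalIntegrable_deriv

lemma integral_one_div_sqrt_one_sub_sq (a b : ℝ) :
    ∫ t in a..b, 1 / √(1 - t ^ 2) = arcsin b - arcsin a := by
  refine integral_eq_of_hasDerivAt_off_countable arcsin _ (s := {-1, 1}) (Set.toFinite _).countable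
    continuous_arcsin.continuousOn (fun t ht ↦ ?_)
    (intervalIntegrable_one_div_sqrt_one_sub_sq a b)
  obtain ⟨h₁, h₂⟩ : t ≠ -1 ∧ t ≠ 1 := by simpa using ht.2
  exact hasDerivAt_arcsin h₁ h₂

lemma hasSum_arcsin {x : ℝ} (hx : |x| ≤ 1) :
    HasSum (fun n : ℕ ↦ (n.centralBinom : ℝ) / 4 ^ n * (x ^ (2 * n + 1) / (2 * n + 1)))
      (arcsin x) := by
  have hsum : ∀ᵐ t : ℝ, t ∈ Set.uIoc 0 x →
      HasSum (fun n : ℕ ↦ (n.centralBinom : ℝ) / 4 ^ n * t ^ (2 * n)) (1 / √(1 - t ^ 2)) := by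
    filter_upwards [volume.ae_ne 1, volume.ae_ne (-1)] with t h_one h_neg_one ht
    have hle : |t| ≤ |x| := by
      simpa using Set.abs_sub_left_of_mem_uIcc (Set.uIoc_subset_uIcc ht)
    have hlt : |t| < 1 := (hle.trans hx).lt_of_ne fun h ↦
      (eq_or_eq_neg_of_abs_eq h).elim h_one h_neg_one
    simpa only [pow_mul] using
      hasSum_one_div_sqrt_one_sub (x := t ^ 2) (by simpa using hlt)
  have hterm_nonneg (n : ℕ) (t : ℝ) : 0 ≤ (n.centralBinom : ℝ) / 4 ^ n * t ^ (2 * n) :=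
    mul_nonneg (by positivity) ((even_two_mul n).pow_nonneg t)
  have hintegral := intervalIntegral.hasSum_integral_of_dominated_convergence
    (fun (n : ℕ) t ↦ (n.centralBinom : ℝ) / 4 ^ n * t ^ (2 * n))
    (fun n ↦ by fun_prop)
    (fun n ↦ .of_forall fun t _ ↦ (norm_of_nonneg (hterm_nonneg n t)).le)
    (hsum.mono fun t ht hmem ↦ (ht hmem).summable)
    ((intervalIntegrable_one_div_sqrt_one_sub_sq 0 x).congr_ae <|
      (ae_restrict_iff' measurableSet_uIoc).2 <| hsum.mono fun t ht hmem ↦ (ht hmem).tsum_eq.symm)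
    hsum
  rw [integral_one_div_sqrt_one_sub_sq, arcsin_zero, sub_zero] at hintegral
  simpa using hintegral

lemma arcsin_sqrt_two_div_two : arcsin (√2 / 2) = π / 4 :=
  arcsin_eq_of_sin_eq sin_pi_div_four ⟨by linarith [pi_pos], by linarith [pi_pos]⟩

lemma sqrt_two_div_two_pow_two_mul_add_one (k : ℕ) :
    (√2 / 2) ^ (2 * k + 1) = √2 / 2 * (1 / 2 ^ k) := by
  have hsq : (√2 / 2) ^ 2 = 1 / 2 := by
    rw [div_pow, sq_sqrt zero_le_two]
    norm_num
  rw [pow_succ', pow_mul, hsq, one_div_pow]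

/-- the series `2√2 · ∑_{k=0}^∞ C(2k,k)/((2k+1)·8^k)` converges
and its sum equals `π`. -/
theorem central_binomial_series_eq_pi :
    Summable (fun k : ℕ => (Nat.choose (2 * k) k : ℝ) / ((2 * k + 1) * 8 ^ k)) ∧
    2 * Real.sqrt 2 *
      ∑' k : ℕ, (Nat.choose (2 * k) k : ℝ) / ((2 * k + 1) * 8 ^ k) = Real.pi := by
  have hx : |√2 / 2| ≤ 1 := by
    rw [abs_of_nonneg (by positivity)]
    linarith [sqrt_two_lt_three_halves]
  have hterm (k : ℕ) : (k.centralBinom : ℝ) / 4 ^ k * ((√2 / 2) ^ (2 * k + 1) / (2 * k + 1)) =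
      √2 / 2 * (Nat.choose (2 * k) k / ((2 * k + 1) * 8 ^ k)) := by
    rw [sqrt_two_div_two_pow_two_mul_add_one, Nat.centralBinom_eq_two_mul_choose,
      show (8 : ℝ) = 4 * 2 by norm_num, mul_pow]
    field_simp
  have hsum := hasSum_arcsin hx
  simp only [hterm, arcsin_sqrt_two_div_two] at hsum
  have hvalue := hsum.tsum_eq
  rw [tsum_mul_left] at hvalue
  exact ⟨(summable_mul_left_iff (by positivity)).1 hsum.summable, by linarith⟩
end

section
/- Proposition: for every integer radius r ≥ 1, let M(r) = (1/(8r²)) · Σ_{n=0}^{2r−1} a_n, where a_n = x_n + y_n is the Manhattan distance to the origin of the n-th point of the signum circle path of radius r (this is the arithmetic mean of the values 1/π_n = a_n/(4r)). Then M(r) converges to π/16 + 1/8 as r → ∞. -/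
open Filter Finset Real

/-!
After `n` steps the path has `y - x = n - r`, so on the circle `x² + y² = r²` the Manhattan distance
would be `√(2r² - (n - r)²)`. The sign of `sₙ` tells whether `(aₙ, cₙ)` lies inside the ellipse with
foci `(±1, 0)` and semi-major axis `√2 r`; this ellipse is so close to the circle of radius `√2 r`
that a step moves `aₙ` towards the next ideal value whenever the two differ by at least `1`, and the
ideal value itself changes by at most `1` per step.
Hence `aₙ` never deviates from it by more than `2`, and the sum of the `aₙ` is, up to `O(r)`, the
integral `∫ x in -r..r, √(2r² - x²) = (1 + π / 2) r²`.
-/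

section LipschitzIntegral

variable {E : Type*} [NormedAddCommGroup E] [NormedSpace ℝ E] [CompleteSpace E] {f : ℝ → E}
  {K : NNReal}

lemma norm_smul_sub_integral_le_of_lipschitzOnWith {a b : ℝ}
    (hf : LipschitzOnWith K f (Set.uIcc a b)) :
    ‖(b - a) • f a - ∫ x in a..b, f x‖ ≤ K * (b - a) ^ 2 := by
  have pointwise : ∀ x ∈ Set.uIoc a b, ‖f a - f x‖ ≤ K * |b - a| := by
    intro x hx
    have hx' := Set.uIoc_subset_uIcc hx
    refine (hf.norm_sub_le Set.left_mem_uIcc hx').trans ?_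
    rw [norm_sub_rev, norm_eq_abs]
    exact mul_le_mul_of_nonneg_left (Set.abs_sub_left_of_mem_uIcc hx') K.coe_nonneg
  calc ‖(b - a) • f a - ∫ x in a..b, f x‖ = ‖∫ x in a..b, (f a - f x)‖ := by
        rw [intervalIntegral.integral_sub intervalIntegrable_const
          hf.continuousOn.intervalIntegrable, intervalIntegral.integral_const]
    _ ≤ K * |b - a| * |b - a| := intervalIntegral.norm_integral_le_of_norm_le_const pointwise
    _ = K * (b - a) ^ 2 := by rw [mul_assoc, ← sq, sq_abs]

lemma norm_sum_sub_integral_le_of_lipschitzOnWith {x₀ : ℝ} {N : ℕ}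
    (hf : LipschitzOnWith K f (Set.Icc x₀ (x₀ + N))) :
    ‖∑ n ∈ range N, f (x₀ + n) - ∫ x in x₀..x₀ + N, f x‖ ≤ K * N := by
  have lipschitz : ∀ n < N, LipschitzOnWith K f (Set.uIcc (x₀ + n) (x₀ + (n + 1 : ℕ))) := by
    intro n hn
    have hn' : ((n + 1 : ℕ) : ℝ) ≤ N := by exact_mod_cast hn
    rw [Set.uIcc_of_le (by gcongr; omega)]
    exact hf.mono (Set.Icc_subset_Icc (by simp) (by gcongr))
  have integral_eq : ∑ n ∈ range N, ∫ x in x₀ + n..x₀ + (n + 1 : ℕ), f x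
      = ∫ x in x₀..x₀ + N, f x := by
    simpa using intervalIntegral.sum_integral_adjacent_intervals (a := fun n : ℕ => x₀ + n)
      fun n hn => (lipschitz n hn).continuousOn.intervalIntegrable
  have unit_step : ∀ n < N, ‖f (x₀ + n) - ∫ x in x₀ + n..x₀ + (n + 1 : ℕ), f x‖ ≤ K := by
    intro n hn
    have length : x₀ + (n + 1 : ℕ) - (x₀ + n) = 1 := by push_cast; ring
    simpa only [length, one_smul, one_pow, mul_one] using
      norm_smul_sub_integral_le_of_lipschitzOnWith (lipschitz n hn)
  rw [← integral_eq, ← sum_sub_distrib]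
  refine (norm_sum_le_of_le _ fun n hn => unit_step n (mem_range.mp hn)).trans_eq ?_
  rw [sum_const, card_range, nsmul_eq_mul, mul_comm]

end LipschitzIntegral

lemma integral_sqrt_sq_sub_sq {R α β : ℝ} (hR : 0 ≤ R) (hα : α ∈ Set.Icc (-(π / 2)) (π / 2))
    (hβ : β ∈ Set.Icc (-(π / 2)) (π / 2)) :
    ∫ x in R * sin α..R * sin β, √(R ^ 2 - x ^ 2)
      = R ^ 2 * ((cos β * sin β - cos α * sin α + β - α) / 2) := by
  have pullback : Set.EqOn (fun θ => √(R ^ 2 - (R * sin θ) ^ 2) * (R * cos θ))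
      (fun θ => R ^ 2 * cos θ ^ 2) (Set.uIcc α β) := by
    intro θ hθ
    have hcos : 0 ≤ cos θ := cos_nonneg_of_mem_Icc (Set.uIcc_subset_Icc hα hβ hθ)
    have hsq : R ^ 2 - (R * sin θ) ^ 2 = (R * cos θ) ^ 2 := by
      rw [mul_pow, mul_pow, sin_sq]; ring
    simp only [hsq, sqrt_sq (mul_nonneg hR hcos)]
    ring
  calc ∫ x in R * sin α..R * sin β, √(R ^ 2 - x ^ 2)
      = ∫ θ in α..β, √(R ^ 2 - (R * sin θ) ^ 2) * (R * cos θ) :=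
        (intervalIntegral.integral_comp_mul_deriv (fun θ _ => (hasDerivAt_sin θ).const_mul R)
          (by fun_prop) (g := fun x => √(R ^ 2 - x ^ 2)) (by fun_prop)).symm
    _ = ∫ θ in α..β, R ^ 2 * cos θ ^ 2 := intervalIntegral.integral_congr pullback
    _ = R ^ 2 * ((cos β * sin β - cos α * sin α + β - α) / 2) := by
        rw [intervalIntegral.integral_const_mul, integral_cos_sq]

lemma lipschitzOnWith_sqrt_sub_sq (b : ℝ) :
    LipschitzOnWith 1 (fun x => √(b - x ^ 2)) {x | 2 * x ^ 2 ≤ b} := by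
  refine LipschitzOnWith.of_dist_le_mul fun x (hx : 2 * x ^ 2 ≤ b) y (hy : 2 * y ^ 2 ≤ b) => ?_
  rw [NNReal.coe_one, one_mul, dist_eq, dist_eq]
  have hx_le : |x| ≤ √(b - x ^ 2) := abs_le_sqrt (by linarith)
  have hy_le : |y| ≤ √(b - y ^ 2) := abs_le_sqrt (by linarith)
  have hx_sq : √(b - x ^ 2) ^ 2 = b - x ^ 2 := sq_sqrt (by linarith [sq_nonneg x])
  have hy_sq : √(b - y ^ 2) ^ 2 = b - y ^ 2 := sq_sqrt (by linarith [sq_nonneg y])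
  set u := √(b - x ^ 2)
  set v := √(b - y ^ 2)
  have hu : 0 ≤ u := sqrt_nonneg _
  have hv : 0 ≤ v := sqrt_nonneg _
  have sum_nonneg : 0 ≤ u + v := add_nonneg hu hv
  have product_eq : |u - v| * (u + v) = |x - y| * |x + y| := by
    rw [← abs_of_nonneg sum_nonneg, ← abs_mul, ← abs_mul, abs_eq_abs]
    right
    linear_combination hx_sq - hy_sq
  have abs_add_le_sum : |x + y| ≤ u + v := (abs_add_le x y).trans (add_le_add hx_le hy_le)
  rcases sum_nonneg.eq_or_lt with sum_zero | sum_pos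
  · rw [show u = 0 by linarith, show v = 0 by linarith, sub_zero, abs_zero]
    exact abs_nonneg _
  · refine le_of_mul_le_mul_right ?_ sum_pos
    exact product_eq.trans_le (mul_le_mul_of_nonneg_left abs_add_le_sum (abs_nonneg _))

/-- The value of `x + y` at the point of the circle `x² + y² = r²` with `y - x = d` and `x + y ≥ 0`.
For `|d| ≤ |r|` this point lies in the closed first quadrant, so that `x + y` is its Manhattan
distance to the origin; for `d² > 2r²` there is no such point and the square root is `0`. -/
noncomputable def circleManhattan (r d : ℝ) : ℝ := √(2 * r ^ 2 - d ^ 2)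

lemma circleManhattan_sq {r d : ℝ} (hd : |d| ≤ |r|) :
    circleManhattan r d ^ 2 = 2 * r ^ 2 - d ^ 2 :=
  sq_sqrt (by linarith [sq_le_sq.mpr hd, sq_nonneg r])

lemma abs_le_circleManhattan {r d : ℝ} (hd : |d| ≤ |r|) : |r| ≤ circleManhattan r d :=
  abs_le_sqrt (by linarith [sq_le_sq.mpr hd])

lemma circleManhattan_neg_self {r : ℝ} (hr : 0 ≤ r) : circleManhattan r (-r) = r := by
  rw [circleManhattan, show 2 * r ^ 2 - (-r) ^ 2 = r ^ 2 by ring, sqrt_sq hr]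

lemma lipschitzOnWith_circleManhattan (r : ℝ) :
    LipschitzOnWith 1 (circleManhattan r) {d | |d| ≤ |r|} :=
  (lipschitzOnWith_sqrt_sub_sq (2 * r ^ 2)).mono fun d hd =>
    show 2 * d ^ 2 ≤ 2 * r ^ 2 from mul_le_mul_of_nonneg_left (sq_le_sq.mpr hd) zero_le_two

lemma integral_circleManhattan {r : ℝ} (hr : 0 ≤ r) :
    ∫ d in -r..r, circleManhattan r d = (1 + π / 2) * r ^ 2 := by
  have radius_sq : (√2 * r) ^ 2 = 2 * r ^ 2 := by rw [mul_pow, sq_sqrt zero_le_two]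
  have sqrt_two_sq : √2 ^ 2 = 2 := sq_sqrt zero_le_two
  have quarter_mem : π / 4 ∈ Set.Icc (-(π / 2)) (π / 2) := by
    constructor <;> linarith [pi_pos]
  have neg_quarter_mem : -(π / 4) ∈ Set.Icc (-(π / 2)) (π / 2) := by
    constructor <;> linarith [pi_pos]
  have radius_mul_sin : √2 * r * sin (π / 4) = r := by
    rw [sin_pi_div_four]; linear_combination r / 2 * sqrt_two_sq
  have h := integral_sqrt_sq_sub_sq (mul_nonneg (sqrt_nonneg 2) hr) neg_quarter_mem quarter_mem
  rw [sin_neg, cos_neg, mul_neg, radius_mul_sin, radius_sq, sin_pi_div_four, cos_pi_div_four] at h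
  simp only [circleManhattan]
  rw [h]
  linear_combination r ^ 2 / 2 * sqrt_two_sq

lemma focalSum_nonneg (a c : ℝ) : 0 ≤ focalSum a c :=
  add_nonneg (sqrt_nonneg _) (sqrt_nonneg _)

lemma focalSum_sq (a c : ℝ) : focalSum a c ^ 2 =
    2 * (a ^ 2 + c ^ 2 + 1) + 2 * √(((a - 1) ^ 2 + c ^ 2) * ((a + 1) ^ 2 + c ^ 2)) := by
  rw [focalSum, add_sq, sq_sqrt (by positivity), sq_sqrt (by positivity), mul_assoc,
    ← sqrt_mul (by positivity)]
  ring

lemma focalSum_sq_le (a c : ℝ) : focalSum a c ^ 2 ≤ 4 * (a ^ 2 + c ^ 2 + 1) := by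
  have product_le : √(((a - 1) ^ 2 + c ^ 2) * ((a + 1) ^ 2 + c ^ 2)) ≤ a ^ 2 + c ^ 2 + 1 :=
    sqrt_le_iff.mpr ⟨by positivity, by nlinarith [sq_nonneg a]⟩
  rw [focalSum_sq]
  linarith

lemma le_focalSum_sq (a c : ℝ) : 4 * (a ^ 2 + c ^ 2) ≤ focalSum a c ^ 2 := by
  have le_product : a ^ 2 + c ^ 2 - 1 ≤ √(((a - 1) ^ 2 + c ^ 2) * ((a + 1) ^ 2 + c ^ 2)) :=
    le_sqrt_of_sq_le (by nlinarith [sq_nonneg c])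
  rw [focalSum_sq]
  linarith

lemma sub_mul_focalSum (a c : ℝ) :
    (√((a - 1) ^ 2 + c ^ 2) - √((a + 1) ^ 2 + c ^ 2)) * focalSum a c = -(4 * a) := by
  rw [focalSum, mul_comm, ← sq_sub_sq, sq_sqrt (by positivity), sq_sqrt (by positivity)]
  ring

lemma add_mul_sub_nonpos_iff_focalSum_le {a : ℝ} (ha : 0 < a) (r c : ℝ) :
    a + r / √2 * (√((a - 1) ^ 2 + c ^ 2) - √((a + 1) ^ 2 + c ^ 2)) ≤ 0 ↔
      focalSum a c ≤ 2 * √2 * r := by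
  have focalSum_pos : 0 < focalSum a c := by unfold focalSum; positivity
  have factorization :
      (a + r / √2 * (√((a - 1) ^ 2 + c ^ 2) - √((a + 1) ^ 2 + c ^ 2))) * focalSum a c
        = a * (focalSum a c - 2 * √2 * r) := by
    have hdiv : r / √2 * 2 = √2 * r := by
      rw [div_mul_comm, div_sqrt]
    rw [add_mul, mul_assoc, sub_mul_focalSum]
    linear_combination (-2 * a) * hdiv
  rw [← not_lt, ← mul_pos_iff_of_pos_right focalSum_pos, factorization,
    mul_pos_iff_of_pos_left ha, sub_pos, not_lt]

lemma sStep_eq_one_or_neg_one (r n : ℕ) (x y : ℝ) : sStep r n x y = 1 ∨ sStep r n x y = -1 := by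
  unfold sStep sgn
  split_ifs <;> simp

lemma sStep_eq_one_iff {x y : ℝ} (hxy : 0 < x + y) (r n : ℕ) :
    sStep r n x y = 1 ↔ focalSum (x + y) ((r : ℝ) - n - 1) ≤ 2 * √2 * r := by
  rw [← add_mul_sub_nonpos_iff_focalSum_le hxy]
  unfold sStep sgn
  split_ifs with h
  · simp only [h, neg_neg]
  · simp only [h, iff_false]
    norm_num

lemma sStep_eq_one {r n : ℕ} {x y : ℝ} (hxy : 0 < x + y)
    (h : (x + y) ^ 2 + ((r : ℝ) - n - 1) ^ 2 + 1 ≤ 2 * (r : ℝ) ^ 2) : sStep r n x y = 1 := by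
  refine (sStep_eq_one_iff hxy r n).mpr (le_of_sq_le_sq ?_ (by positivity))
  rw [mul_pow, mul_pow, sq_sqrt zero_le_two]
  linarith [focalSum_sq_le (x + y) ((r : ℝ) - n - 1)]

lemma sStep_eq_neg_one {r n : ℕ} {x y : ℝ} (hxy : 0 < x + y)
    (h : 2 * (r : ℝ) ^ 2 < (x + y) ^ 2 + ((r : ℝ) - n - 1) ^ 2) : sStep r n x y = -1 := by
  refine (sStep_eq_one_or_neg_one r n x y).resolve_left fun h_one => ?_
  have inside := pow_le_pow_left₀ (focalSum_nonneg _ _) ((sStep_eq_one_iff hxy r n).mp h_one) 2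
  rw [mul_pow, mul_pow, sq_sqrt zero_le_two] at inside
  linarith [le_focalSum_sq (x + y) ((r : ℝ) - n - 1)]

/-- The Manhattan distance `aₙ = xₙ + yₙ` from the origin to the `n`-th point of the path. -/
noncomputable def manhattanDist (r n : ℕ) : ℝ := (circlePath r n).1 + (circlePath r n).2

lemma manhattanDist_zero (r : ℕ) : manhattanDist r 0 = r := by
  simp [manhattanDist, circlePath]

lemma manhattanDist_succ (r n : ℕ) : manhattanDist r (n + 1) = manhattanDist r n + sTerm r n := by
  simp only [manhattanDist, sTerm, circlePath]
  ring

lemma abs_add_sub_le_two {u s g g' : ℝ} (hs : s = 1 ∨ s = -1) (hg : |g' - g| ≤ 1)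
    (h_down : g' < u → s = -1) (h_up : u ≤ g' - 1 → s = 1) (hu : |u - g| ≤ 2) :
    |u + s - g'| ≤ 2 := by
  rw [abs_le] at *
  rcases lt_or_ge g' u with above | not_above
  · rw [h_down above]; constructor <;> linarith
  rcases le_or_gt u (g' - 1) with below | not_below
  · rw [h_up below]; constructor <;> linarith
  · rcases hs with rfl | rfl <;> constructor <;> linarith

lemma abs_natCast_sub_le_abs {r n : ℕ} (hn : n ≤ 2 * r) : |(n : ℝ) - r| ≤ |(r : ℝ)| := by
  have hn' : (n : ℝ) ≤ 2 * r := by exact_mod_cast hn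
  rw [Nat.abs_cast, abs_le]
  constructor <;> linarith

lemma abs_manhattanDist_sub_circleManhattan_le {r : ℕ} (hr : 3 ≤ r) {n : ℕ} (hn : n ≤ 2 * r) :
    |manhattanDist r n - circleManhattan r (n - r)| ≤ 2 := by
  have hr' : (3 : ℝ) ≤ r := by exact_mod_cast hr
  induction n with
  | zero =>
    simp [manhattanDist_zero, circleManhattan_neg_self r.cast_nonneg]
  | succ n ih =>
    specialize ih (by omega)
    have mem := abs_natCast_sub_le_abs (show n ≤ 2 * r by omega)
    have mem_succ := abs_natCast_sub_le_abs hn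
    have radius_le := abs_le_circleManhattan mem
    have radius_le_succ := abs_le_circleManhattan mem_succ
    rw [Nat.abs_cast] at radius_le radius_le_succ
    have ha : 0 < manhattanDist r n := by linarith [(abs_le.mp ih).1]
    have variation := (lipschitzOnWith_circleManhattan r).norm_sub_le mem_succ mem
    have on_circle : circleManhattan r ((n + 1 : ℕ) - r) ^ 2 + ((r : ℝ) - n - 1) ^ 2
        = 2 * (r : ℝ) ^ 2 := by
      rw [circleManhattan_sq mem_succ]
      push_cast
      ring
    rw [manhattanDist_succ]
    refine abs_add_sub_le_two (sStep_eq_one_or_neg_one r n _ _) (by simpa using variation)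
      (fun above => sStep_eq_neg_one ha ?_) (fun below => sStep_eq_one ha ?_) ih
    · have outside := pow_lt_pow_left₀ above (by linarith) two_ne_zero
      unfold manhattanDist at outside
      linarith
    · have inside := pow_le_pow_left₀ ha.le below 2
      unfold manhattanDist at inside
      linarith

lemma abs_sum_manhattanDist_sub_le {r : ℕ} (hr : 3 ≤ r) :
    |∑ n ∈ range (2 * r), manhattanDist r n - (1 + π / 2) * (r : ℝ) ^ 2| ≤ 6 * (r : ℝ) := by
  have tracking : |∑ n ∈ range (2 * r), manhattanDist r n
      - ∑ n ∈ range (2 * r), circleManhattan r (n - r)| ≤ 4 * (r : ℝ) := by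
    rw [← sum_sub_distrib]
    calc _ ≤ ∑ n ∈ range (2 * r), |manhattanDist r n - circleManhattan r (n - r)| :=
          abs_sum_le_sum_abs _ _
      _ ≤ ∑ _n ∈ range (2 * r), (2 : ℝ) := sum_le_sum fun n hn =>
          abs_manhattanDist_sub_circleManhattan_le hr (mem_range.mp hn).le
      _ = 4 * (r : ℝ) := by
          rw [sum_const, card_range, nsmul_eq_mul]
          push_cast
          ring
  have right_end : -(r : ℝ) + (2 * r : ℕ) = r := by push_cast; ring
  have riemann : |∑ n ∈ range (2 * r), circleManhattan r (n - r) - (1 + π / 2) * (r : ℝ) ^ 2|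
      ≤ 2 * (r : ℝ) := by
    have lipschitz : LipschitzOnWith 1 (circleManhattan r)
        (Set.Icc (-(r : ℝ)) (-(r : ℝ) + (2 * r : ℕ))) :=
      (lipschitzOnWith_circleManhattan r).mono fun d hd => by
        rw [right_end] at hd
        exact (abs_le.mpr hd).trans (le_abs_self _)
    have h := norm_sum_sub_integral_le_of_lipschitzOnWith lipschitz
    rw [right_end, integral_circleManhattan r.cast_nonneg] at h
    simpa [neg_add_eq_sub] using h
  exact (abs_sub_le _ _ _).trans ((add_le_add tracking riemann).trans_eq (by ring))

lemma abs_mean_manhattanDist_sub_le {r : ℕ} (hr : 3 ≤ r) :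
    |1 / (8 * (r : ℝ) ^ 2) * ∑ n ∈ range (2 * r), manhattanDist r n - (π / 16 + 1 / 8)|
      ≤ 1 / (r : ℝ) := by
  have hr_ne : (r : ℝ) ≠ 0 := by positivity
  set S := ∑ n ∈ range (2 * r), manhattanDist r n
  have error_eq : 1 / (8 * (r : ℝ) ^ 2) * S - (π / 16 + 1 / 8)
      = (S - (1 + π / 2) * r ^ 2) / (8 * (r : ℝ) ^ 2) := by
    field_simp
    ring
  calc |1 / (8 * (r : ℝ) ^ 2) * S - (π / 16 + 1 / 8)|
      = |S - (1 + π / 2) * r ^ 2| / (8 * (r : ℝ) ^ 2) := by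
        rw [error_eq, abs_div, abs_of_nonneg (a := 8 * (r : ℝ) ^ 2) (by positivity)]
    _ ≤ 6 * r / (8 * (r : ℝ) ^ 2) := by gcongr; exact abs_sum_manhattanDist_sub_le hr
    _ = 6 / 8 * (1 / r) := by field_simp
    _ ≤ 1 / r := mul_le_of_le_one_left (by positivity) (by norm_num)

/-- Proposition: the arithmetic mean
`M(r) = (1/(8r²)) · ∑_{n=0}^{2r-1} aₙ` of the values `1/πₙ = aₙ/(4r)`, where
`aₙ = xₙ + yₙ` is the Manhattan distance of the `n`-th point of the signum
circle path of radius `r` to the origin, converges to `π/16 + 1/8`. -/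
theorem arithmeticMean_inv_pi_tendsto :
    Filter.Tendsto (fun r : ℕ =>
      1 / (8 * (r : ℝ) ^ 2) * ∑ n ∈ Finset.range (2 * r),
        ((circlePath r n).1 + (circlePath r n).2))
      Filter.atTop (nhds (Real.pi / 16 + 1 / 8)) := by
  change Tendsto (fun r : ℕ => 1 / (8 * (r : ℝ) ^ 2) * ∑ n ∈ range (2 * r), manhattanDist r n) _ _
  rw [tendsto_iff_norm_sub_tendsto_zero]
  refine squeeze_zero' (.of_forall fun _ => norm_nonneg _) ?_ tendsto_one_div_atTop_nhds_zero_nat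
  filter_upwards [eventually_ge_atTop 3] with r hr
  exact abs_mean_manhattanDist_sub_le hr
end
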